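/- arXiv:1704.03795 — 4 statements merged into one kernel-verified Lean document; each statement's English description precedes it below -/
import Mathlib

section
/- Let k ≥ 2 and M ≥ 2k+1 be integers and let d_1, …, d_k be integers with 2 ≤ d_1 ≤ … ≤ d_k and d_1 + ⋯ + d_k = M + k. Then ∑_{i=1}^{k-1} d_i(d_i+1)/2 + (d_k − 1)d_k/2 − k ≥ 2M − 2. -/
/-!
Write `T x = x * (x + 1) / 2`. No integer lies strictly between `1` and `2`, so the convex function
`T` lies on or above its secant `2 * x - 1` through these points at every integer `x`. The reduced
term `(d j - 1) * d j / 2` is `T (d j - 1)`, so the left-hand side is a sum of `k` values of `T` at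
integers with sum `M + k - 1`, minus `k`; hence it is at least `2 * (M + k - 1) - k - k`.
-/

theorem two_mul_sub_one_le_mul_add_one_ediv_two (x : ℤ) : 2 * x - 1 ≤ x * (x + 1) / 2 := by
  have secant_nonneg : 0 ≤ (x - 1) ^ 2 - (x - 1) := sub_nonneg.mpr (Int.le_self_sq (x - 1))
  rw [Int.le_ediv_iff_mul_le two_pos]
  linarith

theorem two_mul_sum_sub_card_le_sum_mul_add_one_ediv_two {ι : Type*} (s : Finset ι) (d : ι → ℤ) :
    2 * ∑ i ∈ s, d i - s.card ≤ ∑ i ∈ s, d i * (d i + 1) / 2 :=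
  calc 2 * ∑ i ∈ s, d i - s.card
    _ = ∑ i ∈ s, (2 * d i - 1) := by simp [Finset.mul_sum]
    _ ≤ ∑ i ∈ s, d i * (d i + 1) / 2 :=
      Finset.sum_le_sum fun i _ => two_mul_sub_one_le_mul_add_one_ediv_two (d i)

theorem stmt_0_general {ι : Type*} [DecidableEq ι] {s : Finset ι} {j : ι} (hj : j ∈ s)
    (M : ℤ) (d : ι → ℤ) (hsum : ∑ i ∈ s, d i = M + s.card) :
    (∑ i ∈ s.erase j, d i * (d i + 1) / 2) + (d j - 1) * d j / 2 - s.card ≥ 2 * M - 2 := by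
  have unreduced := two_mul_sum_sub_card_le_sum_mul_add_one_ediv_two (s.erase j) d
  have reduced : 2 * (d j - 1) - 1 ≤ (d j - 1) * d j / 2 := by
    simpa only [sub_add_cancel] using two_mul_sub_one_le_mul_add_one_ediv_two (d j - 1)
  have sum_split := Finset.sum_erase_add s d hj
  have card_split : ((s.erase j).card : ℤ) + 1 = s.card := mod_cast Finset.card_erase_add_one hj
  linarith

/-- Lemma 2.1 of the paper. Let `k ≥ 2`, `M ≥ 2k+1` be integers and let
`d 0 ≤ d 1 ≤ … ≤ d (k-1)` be integers with `2 ≤ d 0` and `∑ d i = M + k`.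
Then `∑_{i=1}^{k-1} d_i(d_i+1)/2 + (d_k-1)d_k/2 - k ≥ 2M - 2`
(indices shifted so that the paper's `d_i` is `d (i-1)`; the divisions are
exact integer divisions). -/
theorem stmt_0 (k : ℕ) (M : ℤ) (d : ℕ → ℤ)
    (hk : 2 ≤ k) (hM : 2 * (k : ℤ) + 1 ≤ M)
    (hd2 : 2 ≤ d 0)
    (hmono : ∀ i j : ℕ, i ≤ j → j < k → d i ≤ d j)
    (hsum : ∑ i ∈ Finset.range k, d i = M + k) :
    (∑ i ∈ Finset.range (k - 1), d i * (d i + 1) / 2)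
      + (d (k - 1) - 1) * d (k - 1) / 2 - k ≥ 2 * M - 2 := by
  obtain ⟨n, rfl⟩ := Nat.exists_eq_add_of_le' (one_le_two.trans hk)
  simpa [Finset.range_add_one] using
    stmt_0_general (Finset.self_mem_range_succ n) M d (by simpa using hsum)
end

section
/- For every real ε > 0 there exist integers k ≥ 2, M ≥ 2k+1, and integers d_1, …, d_k, ξ_1, …, ξ_k with 2 ≤ d_1 ≤ … ≤ d_k, d_1 + ⋯ + d_k = M + k, and 1 ≤ ξ_i ≤ d_i for each i, satisfying both conditions ∑_{i=1}^k [(d_i+1)(d_i+2) − ξ_i(ξ_i+1)] ≥ 4M + 2d_k + 2c_* − 2k (where c_* is the number of indices i with ξ_i = d_i) and M ≥ 3 + ∑_{i : ξ_i ≥ 2} (ξ_i + 1), such that (ξ_1 ⋯ ξ_k)/(d_1 ⋯ d_k) > 1 − ε. -/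
/-!
If `ξ + 2 ≤ d`, then `(d + 1) (d + 2) - ξ (ξ + 1) ≥ 6 d`, so condition (1) holds for every tuple
all of whose gaps `d i - ξ i` are at least `2`: the sum `6 ∑ d i` dominates both `4 ∑ d i` and
`2 d (k - 1)`, while `c_* = 0`. Condition (2) only asks that the gaps add up to `2 k + 3` or more.
Neither requirement bounds `ξ`, so with the gaps fixed and `ξ` tending to infinity the ratio of the
products tends to `1`.
-/

open Filter Topology

/-- The numerical data of the paper: `d` and `ξ`, restricted to the indices `i < k`, are the
multidegree and the local multiplicities of a complete intersection of codimension `k` in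
`ℙ^(M + k)`, subject to the standing assumptions and to conditions (1) and (2). Indices start at
`0`, so the largest degree is `d (k - 1)`. -/
structure IsAdmissible (k M : ℕ) (d ξ : ℕ → ℕ) : Prop where
  two_le_codim : 2 ≤ k
  two_mul_codim_lt_dim : 2 * k + 1 ≤ M
  two_le_degree : 2 ≤ d 0
  degree_mono : ∀ i j : ℕ, i ≤ j → j < k → d i ≤ d j
  sum_degree : ∑ i ∈ Finset.range k, d i = M + k
  multiplicity_mem : ∀ i < k, 1 ≤ ξ i ∧ ξ i ≤ d i
  condition_one :
    (∑ i ∈ Finset.range k,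
        (((d i : ℤ) + 1) * ((d i : ℤ) + 2) - (ξ i : ℤ) * ((ξ i : ℤ) + 1))) ≥
      4 * (M : ℤ) + 2 * (d (k - 1) : ℤ)
        + 2 * (((Finset.range k).filter fun i => ξ i = d i).card : ℤ) - 2 * (k : ℤ)
  condition_two :
    (M : ℤ) ≥ 3 + ∑ i ∈ (Finset.range k).filter (fun i => 2 ≤ ξ i), ((ξ i : ℤ) + 1)

theorem six_mul_le_of_add_two_le {R : Type*} [CommRing R] [LinearOrder R] [IsStrictOrderedRing R]
    {x d : R} (hx : 0 ≤ x) (hxd : x + 2 ≤ d) : 6 * d ≤ (d + 1) * (d + 2) - x * (x + 1) := by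
  have hmul : x * (x + 1) ≤ (d - 2) * (d - 1) :=
    mul_le_mul (by linarith) (by linarith) (by linarith) (by linarith)
  linarith

section Finset

variable {ι : Type*} {s : Finset ι} {d ξ : ι → ℕ}

theorem four_mul_sum_add_two_mul_le {j : ι} (hj : j ∈ s) (hgap : ∀ i ∈ s, ξ i + 2 ≤ d i) :
    4 * ∑ i ∈ s, (d i : ℤ) + 2 * d j ≤
      ∑ i ∈ s, (((d i : ℤ) + 1) * (d i + 2) - ξ i * (ξ i + 1)) := by
  have hdj : (d j : ℤ) ≤ ∑ i ∈ s, (d i : ℤ) :=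
    Finset.single_le_sum (f := fun i => (d i : ℤ)) (fun i _ => Int.natCast_nonneg (d i)) hj
  calc 4 * ∑ i ∈ s, (d i : ℤ) + 2 * d j
      ≤ ∑ i ∈ s, 6 * (d i : ℤ) := by rw [← Finset.mul_sum]; linarith
    _ ≤ _ := Finset.sum_le_sum fun i hi =>
      six_mul_le_of_add_two_le (Int.natCast_nonneg (ξ i)) (by exact_mod_cast hgap i hi)

theorem three_add_sum_filter_add_one_le {M : ℕ} (p : ι → Prop) [DecidablePred p]
    (hM : ∑ i ∈ s, d i = M + s.card) (htotal : ∑ i ∈ s, ξ i + (2 * s.card + 3) ≤ ∑ i ∈ s, d i) :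
    3 + ∑ i ∈ s with p i, (ξ i + 1) ≤ M := by
  have hfilter : ∑ i ∈ s with p i, (ξ i + 1) ≤ ∑ i ∈ s, ξ i + s.card :=
    calc ∑ i ∈ s with p i, (ξ i + 1)
        ≤ ∑ i ∈ s, (ξ i + 1) := Finset.sum_le_sum_of_subset (Finset.filter_subset p s)
      _ = ∑ i ∈ s, ξ i + s.card := by rw [Finset.sum_add_distrib, Finset.card_eq_sum_ones]
  omega

theorem tendsto_prod_natCast_div_prod_add (s : Finset ι) (c : ι → ℝ) :
    Tendsto (fun m : ℕ => (∏ _i ∈ s, (m : ℝ)) / ∏ i ∈ s, ((m : ℝ) + c i)) atTop (𝓝 1) := by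
  simpa only [Finset.prod_div_distrib, Finset.prod_const_one] using
    tendsto_finsetProd s fun i _ => tendsto_natCast_div_add_atTop (c i)

end Finset

theorem IsAdmissible.of_gap {k M : ℕ} {d ξ : ℕ → ℕ} (hk : 2 ≤ k)
    (hmono : ∀ i j : ℕ, i ≤ j → j < k → d i ≤ d j)
    (hM : ∑ i ∈ Finset.range k, d i = M + k) (hξ : ∀ i < k, 1 ≤ ξ i)
    (hgap : ∀ i < k, ξ i + 2 ≤ d i)
    (htotal : ∑ i ∈ Finset.range k, ξ i + (2 * k + 3) ≤ ∑ i ∈ Finset.range k, d i) :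
    IsAdmissible k M d ξ where
  two_le_codim := hk
  two_mul_codim_lt_dim := by
    have hsum : k ≤ ∑ i ∈ Finset.range k, ξ i := by
      simpa using Finset.card_nsmul_le_sum (Finset.range k) ξ 1 (by simpa using hξ)
    omega
  two_le_degree := le_of_add_le_right (hgap 0 (by omega))
  degree_mono := hmono
  sum_degree := hM
  multiplicity_mem i hi := ⟨hξ i hi, le_of_add_le_left (hgap i hi)⟩
  condition_one := by
    have hcard : ((Finset.range k).filter fun i => ξ i = d i).card = 0 := by
      refine Finset.card_eq_zero.mpr (Finset.filter_eq_empty_iff.mpr fun i hi => ?_)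
      have := hgap i (Finset.mem_range.mp hi)
      omega
    have hsum : ∑ i ∈ Finset.range k, (d i : ℤ) = M + k := by exact_mod_cast hM
    have hlast : k - 1 ∈ Finset.range k := Finset.mem_range.mpr (by omega)
    have hquad := four_mul_sum_add_two_mul_le hlast fun i hi => hgap i (Finset.mem_range.mp hi)
    rw [hcard]
    push_cast
    linarith
  condition_two := by
    have h := three_add_sum_filter_add_one_le (s := Finset.range k) (fun i => 2 ≤ ξ i)
      (by simpa only [Finset.card_range] using hM)
      (by simpa only [Finset.card_range] using htotal)
    exact_mod_cast h

theorem isAdmissible_const_add_four {k m : ℕ} (hk : 2 ≤ k) (hm : 1 ≤ m) :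
    IsAdmissible k (k * (m + 3)) (fun _ => m + 4) (fun _ => m) := by
  refine .of_gap hk (fun _ _ _ _ => le_rfl) ?_ (fun _ _ => hm) (fun _ _ => by omega) ?_
  · simp only [Finset.sum_const, Finset.card_range, smul_eq_mul]
    ring
  · simp only [Finset.sum_const, Finset.card_range, smul_eq_mul]
    linarith

theorem stmt_4_general {k : ℕ} (hk : 2 ≤ k) {ε : ℝ} (hε : 0 < ε) :
    ∃ (M : ℕ) (d ξ : ℕ → ℕ), IsAdmissible k M d ξ ∧
      (∏ i ∈ Finset.range k, (ξ i : ℝ)) / (∏ i ∈ Finset.range k, (d i : ℝ)) > 1 - ε := by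
  have hratio := tendsto_prod_natCast_div_prod_add (Finset.range k) fun _ => 4
  obtain ⟨m, hm, hm_pos⟩ :=
    ((hratio.eventually_const_lt (sub_lt_self 1 hε)).and (eventually_ge_atTop 1)).exists
  exact ⟨_, _, _, isAdmissible_const_add_four hk hm_pos, by exact_mod_cast hm⟩

/-- Remark 0.1 of the paper: among tuples `(k, M, d, ξ)` satisfying all the
standing assumptions together with conditions (1) and (2) of the paper, the
ratio `μ/d = (ξ_1⋯ξ_k)/(d_1⋯d_k)` can be made arbitrarily close to `1`. -/
theorem stmt_4 (ε : ℝ) (hε : 0 < ε) :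
    ∃ (k M : ℕ) (d ξ : ℕ → ℕ),
      2 ≤ k ∧ 2 * k + 1 ≤ M ∧
      2 ≤ d 0 ∧
      (∀ i j : ℕ, i ≤ j → j < k → d i ≤ d j) ∧
      (∑ i ∈ Finset.range k, d i = M + k) ∧
      (∀ i < k, 1 ≤ ξ i ∧ ξ i ≤ d i) ∧
      (∑ i ∈ Finset.range k,
          (((d i : ℤ) + 1) * ((d i : ℤ) + 2) - (ξ i : ℤ) * ((ξ i : ℤ) + 1))) ≥
        4 * (M : ℤ) + 2 * (d (k - 1) : ℤ)
          + 2 * (((Finset.range k).filter fun i => ξ i = d i).card : ℤ)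
          - 2 * (k : ℤ) ∧
      (M : ℤ) ≥ 3 + ∑ i ∈ (Finset.range k).filter (fun i => 2 ≤ ξ i),
          ((ξ i : ℤ) + 1) ∧
      (∏ i ∈ Finset.range k, (ξ i : ℝ)) / (∏ i ∈ Finset.range k, (d i : ℝ))
        > 1 - ε := by
  obtain ⟨M, d, ξ, h, hratio⟩ := stmt_4_general le_rfl hε
  exact ⟨2, M, d, ξ, h.two_le_codim, h.two_mul_codim_lt_dim, h.two_le_degree, h.degree_mono,
    h.sum_degree, h.multiplicity_mem, h.condition_one, h.condition_two, hratio⟩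
end

section
/- Let F be a field, let ξ and d be integers with 0 ≤ ξ ≤ d, and let x_{j,α} ∈ F be given for all pairs of integers (j,α) with ξ ≤ j ≤ d and 0 ≤ α ≤ j. Suppose that for every pair of integers (e,α) with 0 ≤ α ≤ e ≤ d one has ∑_{j=max(ξ,e)}^{d} binom(j−α, e−α) · x_{j,α} = 0. Then x_{j,α} = 0 for all ξ ≤ j ≤ d and 0 ≤ α ≤ j. -/
/-!
The equations for distinct `α` are independent, and for fixed `α` those with `e ≥ max ξ α` form a
square triangular system whose diagonal entries `binom(e - α, e - α)` are all `1`. Back substitution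
from `e = d` downwards therefore kills every unknown without any division, so it takes place in an
arbitrary additive commutative monoid.
-/

theorem eq_zero_of_sum_filter_le_smul_eq_zero {ι R M : Type*} [PartialOrder ι] [DecidableLE ι]
    [AddCommMonoid M] [SMulZeroClass R M] {s : Finset ι} {a : ι → ι → R} {v : ι → M}
    (hdiag : ∀ i ∈ s, IsSMulRegular M (a i i))
    (hsum : ∀ i ∈ s, ∑ j ∈ s with i ≤ j, a i j • v j = 0) {i : ι} (hi : i ∈ s) : v i = 0 := by
  have hwf : (s : Set ι).WellFoundedOn (· > ·) := s.finite_toSet.wellFoundedOn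
  refine hwf.induction (P := fun i ↦ v i = 0) hi fun i hi ih ↦ ?_
  have hoff : ∀ j ∈ s.filter (i ≤ ·), j ≠ i → a i j • v j = 0 := by
    intro j hj hne
    obtain ⟨hjs, hij⟩ := Finset.mem_filter.mp hj
    rw [ih j hjs (lt_of_le_of_ne hij hne.symm), smul_zero]
  have hii : a i i • v i = 0 := by
    rw [← hsum i hi, Finset.sum_eq_single_of_mem i (Finset.mem_filter.mpr ⟨hi, le_rfl⟩) hoff]
  exact hdiag i hi (hii.trans (smul_zero _).symm)

theorem stmt_8_general {M : Type*} [AddCommMonoid M] {ξ d : ℕ} {x : ℕ → ℕ → M}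
    (h : ∀ e α : ℕ, ξ ≤ e → α ≤ e → e ≤ d →
      ∑ j ∈ Finset.Icc e d, (j - α).choose (e - α) • x j α = 0)
    {j α : ℕ} (hξj : ξ ≤ j) (hjd : j ≤ d) (hαj : α ≤ j) : x j α = 0 := by
  refine eq_zero_of_sum_filter_le_smul_eq_zero (s := Finset.Icc (max ξ α) d)
    (a := fun e j ↦ (j - α).choose (e - α)) (v := fun j ↦ x j α) (fun e _ ↦ ?_) (fun e he ↦ ?_)
    (Finset.mem_Icc.mpr ⟨max_le hξj hαj, hjd⟩)
  · simpa only [Nat.choose_self] using IsSMulRegular.one M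
  · obtain ⟨hme, hed⟩ := Finset.mem_Icc.mp he
    have htail : (Finset.Icc (max ξ α) d).filter (e ≤ ·) = Finset.Icc e d := by
      ext k
      simp only [Finset.mem_filter, Finset.mem_Icc]
      omega
    rw [htail]
    exact h e α (le_of_max_le_left hme) (le_of_max_le_right hme) hed

/-- The triangular elimination in the proof of Lemma 2.2. Let `F` be a field,
`0 ≤ ξ ≤ d` integers, and `x j α ∈ F` given for `ξ ≤ j ≤ d`, `0 ≤ α ≤ j`.
If for every pair `(e,α)` with `0 ≤ α ≤ e ≤ d` one has
`∑_{j = max ξ e}^{d} C(j-α, e-α) · x j α = 0`, then all the `x j α`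
(with `ξ ≤ j ≤ d`, `0 ≤ α ≤ j`) vanish. -/
theorem stmt_8 (F : Type*) [Field F] (ξ d : ℕ) (hξd : ξ ≤ d)
    (x : ℕ → ℕ → F)
    (h : ∀ e α : ℕ, α ≤ e → e ≤ d →
      ∑ j ∈ Finset.Icc (max ξ e) d, ((j - α).choose (e - α) : F) * x j α = 0) :
    ∀ j α : ℕ, ξ ≤ j → j ≤ d → α ≤ j → x j α = 0 := by
  intro j α
  refine stmt_8_general fun e α hξe hαe hed ↦ ?_
  simpa only [max_eq_right hξe, nsmul_eq_mul] using h e α hαe hed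
end

section
/- Let n ≥ 2 and 1 ≤ ξ ≤ d be integers, and for each pair (j,α) with ξ ≤ j ≤ d and 0 ≤ α ≤ j let q_{j,α} ∈ ℂ[z_2, …, z_n] be homogeneous of degree α (a constant when α = 0). For 0 ≤ e ≤ d define Φ_e ∈ ℂ[u_1, z_2, …, z_n] by Φ_e = ∑_{α=0}^{e} u_1^{e−α} ∑_{j=max(ξ,e)}^{d} binom(j−α, e−α) q_{j,α}. Let λ ∈ ℂ^{n−1}. Then the following are equivalent: (a) Φ_e(t, s·λ) = 0 for all t, s ∈ ℂ and all 0 ≤ e ≤ d; (b) q_{j,α}(λ) = 0 for all ξ ≤ j ≤ d and 0 ≤ α ≤ j. -/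
open MvPolynomial

/-!
By homogeneity, the value of `Φ_e` at `(t, s·λ)` is a binary form in `t` and `s` with coefficients
`∑_j C(j-α, e-α) q_{j,α}(λ)`, so all `Φ_e` vanish on the line if and only if all these numbers are
zero. For fixed `α`, those with `e ≥ max(ξ, α)` depend on the unknowns `q_{j,α}(λ)` through a
matrix, indexed by `e` and `j`, which is upper unitriangular because `C(e-α, e-α) = 1`.
-/

theorem eq_zero_of_sum_Icc_mul_eq_zero {ι R : Type*} [PartialOrder ι] [LocallyFiniteOrder ι]
    [NonUnitalNonAssocSemiring R] {A : ι → ι → R} {c : ι → R} {m d : ι}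
    (hA : ∀ e ∈ Finset.Icc m d, IsLeftRegular (A e e))
    (h : ∀ e ∈ Finset.Icc m d, ∑ j ∈ Finset.Icc e d, A e j * c j = 0) :
    ∀ j ∈ Finset.Icc m d, c j = 0 := by
  intro j hj
  induction hcard : (Finset.Icc j d).card using Nat.strong_induction_on generalizing j with
  | _ k ih =>
    obtain ⟨hmj, hjd⟩ := Finset.mem_Icc.mp hj
    have later_eq_zero : ∀ i ∈ Finset.Icc j d, i ≠ j → c i = 0 := by
      intro i hi hij
      obtain ⟨hji, hid⟩ := Finset.mem_Icc.mp hi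
      refine ih _ ?_ i (Finset.mem_Icc.mpr ⟨hmj.trans hji, hid⟩) rfl
      rw [← hcard]
      exact Finset.card_lt_card
        (Finset.Icc_ssubset_Icc_left hjd (lt_of_le_of_ne hji hij.symm) le_rfl)
    have diagonal : A j j * c j = 0 := by
      rw [← h j hj, Finset.sum_eq_single_of_mem j (Finset.left_mem_Icc.mpr hjd)]
      intro i hi hij
      rw [later_eq_zero i hi hij, mul_zero]
    exact hA j hj (diagonal.trans (mul_zero _).symm)

theorem forall_sum_choose_mul_eq_zero_iff {R : Type*} [NonAssocSemiring R] {ξ d α : ℕ}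
    {c : ℕ → R} :
    (∀ e, α ≤ e → e ≤ d →
        ∑ j ∈ Finset.Icc (max ξ e) d, ((j - α).choose (e - α) : R) * c j = 0)
      ↔ ∀ j, ξ ≤ j → j ≤ d → α ≤ j → c j = 0 := by
  constructor
  · intro h j hξj hjd hαj
    refine eq_zero_of_sum_Icc_mul_eq_zero (m := max ξ α) (d := d)
      (A := fun e j => ((j - α).choose (e - α) : R)) (fun e _ => ?_) (fun e he => ?_) j
      (Finset.mem_Icc.mpr ⟨max_le hξj hαj, hjd⟩)
    · simpa only [Nat.choose_self, Nat.cast_one] using isRegular_one.left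
    · obtain ⟨hme, hed⟩ := Finset.mem_Icc.mp he
      have hξe : ξ ≤ e := (le_max_left ξ α).trans hme
      simpa only [max_eq_right hξe] using h e ((le_max_right ξ α).trans hme) hed
  · intro h e hαe _
    refine Finset.sum_eq_zero fun j hj => ?_
    obtain ⟨hmj, hjd⟩ := Finset.mem_Icc.mp hj
    rw [h j ((le_max_left ξ e).trans hmj) hjd (hαe.trans ((le_max_right ξ e).trans hmj)), mul_zero]

theorem forall_binaryForm_eq_zero_iff {R : Type*} [CommRing R] [IsDomain R] [Infinite R] {e : ℕ}
    {c : ℕ → R} :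
    (∀ t s : R, ∑ α ∈ Finset.range (e + 1), t ^ (e - α) * (s ^ α * c α) = 0)
      ↔ ∀ α ≤ e, c α = 0 := by
  constructor
  · intro h α hα
    have dehomogenization_eq_zero :
        ∑ i ∈ Finset.range (e + 1), Polynomial.monomial i (c i) = 0 := by
      refine Polynomial.zero_of_eval_zero _ fun s => ?_
      simpa only [Polynomial.eval_finsetSum, Polynomial.eval_monomial, one_pow, one_mul,
        mul_comm (s ^ _)] using h 1 s
    simpa [Polynomial.finsetSum_coeff, Polynomial.coeff_monomial, Nat.lt_succ_of_le hα] using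
      congrArg (Polynomial.coeff · α) dehomogenization_eq_zero
  · intro h t s
    refine Finset.sum_eq_zero fun α hα => ?_
    rw [h α (Finset.mem_range_succ_iff.mp hα), mul_zero, mul_zero]

theorem eval_smul_of_isHomogeneous {σ R : Type*} [CommSemiring R] {p : MvPolynomial σ R} {k : ℕ}
    (hp : p.IsHomogeneous k) (s : R) (x : σ → R) : eval (s • x) p = s ^ k * eval x p := by
  rw [eval_eq, eval_eq, Finset.mul_sum]
  refine Finset.sum_congr rfl fun m hm => ?_
  have hdeg : ∑ i ∈ m.support, m i = k := by
    rw [← Finsupp.degree_apply, Finsupp.degree_eq_weight_one]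
    exact hp (mem_support_iff.mp hm)
  simp only [Pi.smul_apply, smul_eq_mul, mul_pow, Finset.prod_mul_distrib,
    Finset.prod_pow_eq_pow_sum, hdeg]
  ring

section ShiftedComponent

variable {σ R : Type*}

/-- The homogeneous component `Φ_e` of degree `e ≤ d` of `∑_{j=ξ}^d ∑_{α=0}^j z_o^{j-α} q_{j,α}` in
the shifted coordinate `u_o = z_o - 1` and the other `z_i`; the variable `X o` stands for `u_o`. -/
noncomputable def shiftedComponent [CommSemiring R] (o : σ) (ξ d : ℕ)
    (Q : ℕ → ℕ → MvPolynomial {i : σ // i ≠ o} R) (e : ℕ) : MvPolynomial σ R :=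
  ∑ α ∈ Finset.range (e + 1), X o ^ (e - α) *
    ∑ j ∈ Finset.Icc (max ξ e) d, C ((j - α).choose (e - α) : R) * rename Subtype.val (Q j α)

/-- The point `(t, s·λ)` of the line through `(1, 0)` and `(0, λ)`, whose distinguished coordinate
is the one of index `o`. -/
def linePoint [DecidableEq σ] [Mul R] (o : σ) (lam : {i : σ // i ≠ o} → R) (t s : R) : σ → R :=
  fun i => if h : i = o then t else s * lam ⟨i, h⟩

variable [DecidableEq σ] {o : σ}

theorem linePoint_self [Mul R] (lam : {i : σ // i ≠ o} → R) (t s : R) :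
    linePoint o lam t s o = t :=
  dif_pos rfl

theorem linePoint_comp_val [Mul R] (lam : {i : σ // i ≠ o} → R) (t s : R) :
    linePoint o lam t s ∘ Subtype.val = s • lam :=
  funext fun i => dif_neg i.2

theorem eval_linePoint_shiftedComponent [CommSemiring R] {ξ d e : ℕ}
    {Q : ℕ → ℕ → MvPolynomial {i : σ // i ≠ o} R}
    (hQ : ∀ j α : ℕ, ξ ≤ j → j ≤ d → α ≤ j → (Q j α).IsHomogeneous α)
    (lam : {i : σ // i ≠ o} → R) (t s : R) :
    eval (linePoint o lam t s) (shiftedComponent o ξ d Q e) =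
      ∑ α ∈ Finset.range (e + 1), t ^ (e - α) * (s ^ α *
        ∑ j ∈ Finset.Icc (max ξ e) d, ((j - α).choose (e - α) : R) * eval lam (Q j α)) := by
  simp only [shiftedComponent, map_sum, map_mul, map_pow, eval_X, eval_C, eval_rename,
    linePoint_self, linePoint_comp_val]
  refine Finset.sum_congr rfl fun α hα => ?_
  rw [Finset.mul_sum (a := s ^ α)]
  refine congrArg _ (Finset.sum_congr rfl fun j hj => ?_)
  obtain ⟨hmj, hjd⟩ := Finset.mem_Icc.mp hj
  have hαj : α ≤ j :=
    (Finset.mem_range_succ_iff.mp hα).trans ((le_max_right ξ e).trans hmj)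
  rw [eval_smul_of_isHomogeneous (hQ j α ((le_max_left ξ e).trans hmj) hjd hαj), mul_left_comm]

theorem stmt_11_general [CommRing R] [IsDomain R] [Infinite R] {ξ d : ℕ}
    {Q : ℕ → ℕ → MvPolynomial {i : σ // i ≠ o} R}
    (hQ : ∀ j α : ℕ, ξ ≤ j → j ≤ d → α ≤ j → (Q j α).IsHomogeneous α)
    (lam : {i : σ // i ≠ o} → R) :
    (∀ t s : R, ∀ e ≤ d, eval (linePoint o lam t s) (shiftedComponent o ξ d Q e) = 0)
      ↔ ∀ j α : ℕ, ξ ≤ j → j ≤ d → α ≤ j → eval lam (Q j α) = 0 :=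
  calc
    _ ↔ ∀ e ≤ d, ∀ t s : R, eval (linePoint o lam t s) (shiftedComponent o ξ d Q e) = 0 :=
      ⟨fun h e he t s => h t s e he, fun h t s e he => h e he t s⟩
    _ ↔ ∀ e ≤ d, ∀ α ≤ e, ∑ j ∈ Finset.Icc (max ξ e) d,
          ((j - α).choose (e - α) : R) * eval lam (Q j α) = 0 := by
      simp only [eval_linePoint_shiftedComponent hQ, forall_binaryForm_eq_zero_iff]
    _ ↔ ∀ α e, α ≤ e → e ≤ d → ∑ j ∈ Finset.Icc (max ξ e) d,
          ((j - α).choose (e - α) : R) * eval lam (Q j α) = 0 :=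
      ⟨fun h α e hα he => h e he α hα, fun h e he α hα => h α e hα he⟩
    _ ↔ ∀ α j, ξ ≤ j → j ≤ d → α ≤ j → eval lam (Q j α) = 0 :=
      forall_congr' fun _ => forall_sum_choose_mul_eq_zero_iff
    _ ↔ _ := forall_comm

end ShiftedComponent

/-- Lemma 2.2 of the paper. Let `n ≥ 2`, `1 ≤ ξ ≤ d`, and for `ξ ≤ j ≤ d`,
`0 ≤ α ≤ j` let `q_{j,α} ∈ ℂ[z_2,…,z_n]` be homogeneous of degree `α`
(the variables `z_2,…,z_n` are indexed by `{i : Fin n // i ≠ 0}`). For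
`0 ≤ e ≤ d` let
`Φ_e = ∑_{α=0}^e u_1^{e-α} ∑_{j=max(ξ,e)}^d C(j-α, e-α) q_{j,α}`
(a polynomial in `u_1 = X 0` and `z_2,…,z_n`), and let `λ ∈ ℂ^{n-1}`. Then
all `Φ_e` vanish identically on the line through `(1,0)` and `(0,λ)`
(i.e. `Φ_e(t, s·λ) = 0` for all `t,s ∈ ℂ` and `0 ≤ e ≤ d`) if and only if
`q_{j,α}(λ) = 0` for all `ξ ≤ j ≤ d`, `0 ≤ α ≤ j`. -/
theorem stmt_11 (n : ℕ) [NeZero n] (hn : 2 ≤ n) (ξ d : ℕ) (hξ : 1 ≤ ξ) (hξd : ξ ≤ d)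
    (Q : ℕ → ℕ → MvPolynomial {i : Fin n // i ≠ 0} ℂ)
    (hQ : ∀ j α : ℕ, ξ ≤ j → j ≤ d → α ≤ j → (Q j α).IsHomogeneous α)
    (Φ : ℕ → MvPolynomial (Fin n) ℂ)
    (hΦ : ∀ e : ℕ, e ≤ d → Φ e =
      ∑ α ∈ Finset.range (e + 1), (X (0 : Fin n)) ^ (e - α) *
        ∑ j ∈ Finset.Icc (max ξ e) d,
          C (((j - α).choose (e - α) : ℂ)) * rename Subtype.val (Q j α))
    (lam : {i : Fin n // i ≠ 0} → ℂ) :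
    (∀ t s : ℂ, ∀ e : ℕ, e ≤ d →
        eval (fun i : Fin n => if h : i = 0 then t else s * lam ⟨i, h⟩) (Φ e) = 0)
      ↔ (∀ j α : ℕ, ξ ≤ j → j ≤ d → α ≤ j → eval lam (Q j α) = 0) := by
  rw [← stmt_11_general hQ lam]
  exact forall₄_congr fun t s e he => by rw [hΦ e he]; rfl
end
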